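/- Let ℓ ≥ 3 be an integer, ε > 0, and let p = p(n) be a function with p = ω(n^{-(ℓ-1)/ℓ}). Then asymptotically almost surely the random graph G(n,p) has the following property: for every choice of pairwise disjoint vertex sets V₁, …, V_ℓ each of size at least εn/ℓ, the number of cycles v₁ v₂ ⋯ v_ℓ in G(n,p) with v_i ∈ V_i for all 1 ≤ i ≤ ℓ is at least (1/2)·p^ℓ·∏_{i=1}^{ℓ} |V_i|. -/

import Mathlib

open Filter Finset SimpleGraph
open scoped Classical

/-- The probability, in the binomial random graph `G(n,p)`, of the event `A`. -/
noncomputable def erProb (n : ℕ) (p : ℝ) (A : SimpleGraph (Fin n) → Prop) : ℝ :=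
  ∑' G : SimpleGraph (Fin n),
    if A G then p ^ G.edgeSet.ncard * (1 - p) ^ (n.choose 2 - G.edgeSet.ncard) else 0

/-- The number of copies of the cycle `C_k` in `G` whose `i`-th vertex (in cyclic order)
lies in `V i`; counted as tuples `(v 0, …, v (k-1))` with `v i ∈ V i` and consecutive
vertices (cyclically) adjacent. -/
noncomputable def cyclesBetween {n : ℕ} (G : SimpleGraph (Fin n)) (k : ℕ)
    (V : Fin k → Finset (Fin n)) : ℕ :=
  (Finset.univ.filter fun v : Fin k → Fin n =>
    (∀ i, v i ∈ V i) ∧ ∀ i : Fin k, G.Adj (v i) (v (i + ⟨1 % k, Nat.mod_lt 1 i.pos⟩))).card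


noncomputable def wt {E : Type*} [Fintype E] (p : ℝ) (S : Finset E) : ℝ :=
  p ^ S.card * (1 - p) ^ (Fintype.card E - S.card)

lemma wt_nonneg {E : Type*} [Fintype E] {p : ℝ} (hp0 : 0 ≤ p) (hp1 : p ≤ 1) (S : Finset E) :
    0 ≤ wt p S := mul_nonneg (pow_nonneg hp0 _) (pow_nonneg (by linarith) _)

lemma wt_sum {E : Type*} [Fintype E] (p : ℝ) : ∑ S : Finset E, wt p S = 1 := by
  have := Fintype.sum_pow_mul_eq_add_pow E p (1 - p)
  simpa [wt] using this

lemma wt_single {E : Type*} [Fintype E] (p : ℝ) (a : E) (k : Finset E → ℝ)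
    (hk : ∀ S, k (insert a S) = k S) :
    ∑ S : Finset E, wt p S * (if a ∈ S then k S else 0) = p * ∑ S : Finset E, wt p S * k S := by
  have key : ∀ f : Finset E → ℝ, ∑ S : Finset E, f S =
      ∑ S ∈ (univ.erase a).powerset, (f S + f (insert a S)) := by
    intro f
    rw [Finset.sum_add_distrib, ← Finset.sum_powerset_insert (Finset.notMem_erase a univ),
      Finset.insert_erase (Finset.mem_univ a), Finset.powerset_univ]
  rw [key, key, Finset.mul_sum]
  apply Finset.sum_congr rfl
  intro S hS
  have ha : a ∉ S := fun h => by
    have := Finset.mem_powerset.1 hS h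
    simp at this
  have hc : S.card + 1 ≤ Fintype.card E := by
    rw [← Finset.card_insert_of_notMem ha]; exact Finset.card_le_univ _
  obtain ⟨d, hd⟩ := Nat.exists_eq_add_of_le hc
  have h1 : wt p S = p ^ S.card * (1 - p) ^ (d + 1) := by
    unfold wt; rw [hd]; congr 2; omega
  have h2 : wt p (insert a S) = p ^ (S.card + 1) * (1 - p) ^ d := by
    unfold wt; rw [Finset.card_insert_of_notMem ha, hd]; congr 2; omega
  rw [h1, h2, hk]
  simp [ha]
  ring

lemma wt_indep {E : Type*} [Fintype E] (p : ℝ) (A : Finset E) (k : Finset E → ℝ)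
    (hk : ∀ a ∈ A, ∀ S, k (insert a S) = k S) :
    ∑ S : Finset E, wt p S * (if A ⊆ S then k S else 0)
      = p ^ A.card * ∑ S : Finset E, wt p S * k S := by
  induction A using Finset.induction_on with
  | empty => simp
  | insert a A ha ih =>
    rw [Finset.card_insert_of_notMem ha, pow_succ', mul_assoc,
      ← ih (fun b hb => hk b (Finset.mem_insert_of_mem hb)), ← wt_single p a]
    · apply Finset.sum_congr rfl
      intro S _
      simp only [Finset.insert_subset_iff]
      split_ifs <;> simp_all
    · intro S
      have : A ⊆ insert a S ↔ A ⊆ S := Finset.subset_insert_iff_of_notMem ha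
      simp only [this, hk a (Finset.mem_insert_self a A)]

lemma wt_supset {E : Type*} [Fintype E] (p : ℝ) (A : Finset E) :
    ∑ S : Finset E, wt p S * (if A ⊆ S then 1 else 0) = p ^ A.card := by
  have := wt_indep p A (fun _ => 1) (by simp)
  simpa [wt_sum] using this

lemma fkg_anti {α : Type*} [DistribLattice α] [Fintype α] (m f g : α → ℝ)
    (hm0 : 0 ≤ m) (hf0 : 0 ≤ f) (hg0 : 0 ≤ g) (hf : Antitone f) (hg : Antitone g)
    (hm : ∀ a b, m a * m b ≤ m (a ⊓ b) * m (a ⊔ b)) :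
    (∑ a, m a * f a) * ∑ a, m a * g a ≤ (∑ a, m a) * ∑ a, m a * (f a * g a) := by
  have := fkg (α := αᵒᵈ) (β := ℝ) (f := f ∘ OrderDual.ofDual)
    (g := g ∘ OrderDual.ofDual) (μ := m ∘ OrderDual.ofDual) (fun a => hm0 _) (fun a => hf0 _) (fun a => hg0 _) hf.dual_left hg.dual_left
    (fun a b => by
      have := hm (OrderDual.ofDual a) (OrderDual.ofDual b)
      rw [mul_comm (m (_ ⊓ _))] at this
      exact this)
  exact this

lemma wt_mod {E : Type*} [Fintype E] (p : ℝ) (S T : Finset E) :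
    wt p S * wt p T = wt p (S ∩ T) * wt p (S ∪ T) := by
  have h := Finset.card_union_add_card_inter S T
  have h1 := Finset.card_le_univ (S ∪ T)
  have h2 := Finset.card_le_card (Finset.subset_union_left (s₁ := S) (s₂ := T))
  have h3 := Finset.card_le_card (Finset.subset_union_right (s₁ := S) (s₂ := T))
  unfold wt
  rw [mul_mul_mul_comm, mul_mul_mul_comm (p ^ (S ∩ T).card), ← pow_add, ← pow_add, ← pow_add,
    ← pow_add]
  congr 2 <;> omega

/-- The key correlation step. -/
lemma janson_step {E : Type*} [Fintype E] {p : ℝ} (hp0 : 0 < p) (hp1 : p ≤ 1)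
    (A : Finset E) (f g : Finset E → ℝ) (hf0 : 0 ≤ f) (hg0 : 0 ≤ g)
    (hf : Antitone f) (hg : Antitone g) (hk : ∀ a ∈ A, ∀ S, g (insert a S) = g S) :
    (∑ S : Finset E, wt p S * (if A ⊆ S then f S else 0)) * (∑ S : Finset E, wt p S * g S) ≤
      ∑ S : Finset E, wt p S * (if A ⊆ S then f S * g S else 0) := by
  have h := fkg_anti (α := Finset E) (fun S => wt p S * (if A ⊆ S then 1 else 0)) f g
    (fun S => mul_nonneg (wt_nonneg hp0.le hp1 S) (by positivity)) hf0 hg0 hf hg (by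
      intro S T
      by_cases hS : A ⊆ S
      · by_cases hT : A ⊆ T
        · have h1 : A ⊆ S ∩ T := Finset.subset_inter hS hT
          have h2 : A ⊆ S ∪ T := hS.trans Finset.subset_union_left
          have := wt_mod p S T
          simp only [Finset.inf_eq_inter, Finset.sup_eq_union, hS, hT, h1, h2, if_true, mul_one]
          exact this.le
        · simp only [hT, if_false, mul_zero]
          exact mul_nonneg (mul_nonneg (wt_nonneg hp0.le hp1 _) (by positivity))
            (mul_nonneg (wt_nonneg hp0.le hp1 _) (by positivity))
      · simp only [hS, if_false, mul_zero, zero_mul]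
        exact mul_nonneg (mul_nonneg (wt_nonneg hp0.le hp1 _) (by positivity))
            (mul_nonneg (wt_nonneg hp0.le hp1 _) (by positivity)))
  rw [wt_supset] at h
  have e : ∀ k : Finset E → ℝ, ∑ S : Finset E, wt p S * (if A ⊆ S then 1 else 0) * k S =
      ∑ S : Finset E, wt p S * (if A ⊆ S then k S else 0) := by
    intro k
    apply Finset.sum_congr rfl
    intro S _
    split_ifs <;> simp
  rw [e f, e g, e (fun S => f S * g S), wt_indep p A g hk] at h
  have hpos : 0 < p ^ A.card := pow_pos hp0 _
  refine le_of_mul_le_mul_left ?_ hpos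
  calc _ = _ := by ring
    _ ≤ _ := h

noncomputable def cnt {E ι : Type*} (I : Finset ι) (A : ι → Finset E) (S : Finset E) : ℝ :=
  ∑ i ∈ I, if A i ⊆ S then 1 else 0

lemma cnt_mono {E ι : Type*} (I : Finset ι) (A : ι → Finset E) : Monotone (cnt I A) := by
  intro S T h
  apply Finset.sum_le_sum
  intro i _
  by_cases hS : A i ⊆ S
  · simp [hS, hS.trans h]
  · simp only [hS, if_false]; positivity

lemma cnt_nonneg {E ι : Type*} (I : Finset ι) (A : ι → Finset E) (S : Finset E) :
    0 ≤ cnt I A S := Finset.sum_nonneg (fun i _ => by positivity)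

lemma janson_deriv {E ι : Type*} [Fintype E] {p : ℝ} (hp0 : 0 < p) (hp1 : p ≤ 1)
    (I : Finset ι) (A : ι → Finset E) (s : ℝ) (hs : 0 ≤ s) (D : ℝ)
    (hD : ∑ i ∈ I, ∑ j ∈ I.filter (fun j => (A i ∩ A j).Nonempty), p ^ (A i ∪ A j).card ≤ D) :
    (∑ i ∈ I, p ^ (A i).card - s * D) * ∑ S : Finset E, wt p S * Real.exp (-s * cnt I A S) ≤
      ∑ S : Finset E, wt p S * (cnt I A S * Real.exp (-s * cnt I A S)) := by
  set Ψ := ∑ S : Finset E, wt p S * Real.exp (-s * cnt I A S) with hΨ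
  have hΨ0 : 0 ≤ Ψ := Finset.sum_nonneg
    (fun S _ => mul_nonneg (wt_nonneg hp0.le hp1 S) (Real.exp_pos _).le)
  have hR : ∑ S : Finset E, wt p S * (cnt I A S * Real.exp (-s * cnt I A S)) =
      ∑ i ∈ I, ∑ S : Finset E, wt p S * (if A i ⊆ S then Real.exp (-s * cnt I A S) else 0) := by
    rw [Finset.sum_comm]
    apply Finset.sum_congr rfl
    intro S _
    rw [← Finset.mul_sum]
    congr 1
    generalize hc : Real.exp (-s * cnt I A S) = c
    rw [cnt, Finset.sum_mul]
    apply Finset.sum_congr rfl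
    intro i _
    split_ifs <;> simp
  rw [hR]
  calc _ ≤ (∑ i ∈ I, p ^ (A i).card -
        s * ∑ i ∈ I, ∑ j ∈ I.filter (fun j => (A i ∩ A j).Nonempty), p ^ (A i ∪ A j).card) * Ψ := by
        gcongr
    _ = ∑ i ∈ I, (p ^ (A i).card -
        s * ∑ j ∈ I.filter (fun j => (A i ∩ A j).Nonempty), p ^ (A i ∪ A j).card) * Ψ := by
        clear_value Ψ
        rw [← Finset.sum_mul, Finset.sum_sub_distrib, Finset.mul_sum]
    _ ≤ _ := by
      apply Finset.sum_le_sum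
      intro i _
      set I1 := I.filter (fun j => (A i ∩ A j).Nonempty)
      set I2 := I.filter (fun j => ¬ (A i ∩ A j).Nonempty)
      have hsplit : ∀ S, cnt I A S = cnt I1 A S + cnt I2 A S := by
        intro S
        exact (Finset.sum_filter_add_sum_filter_not I _ _).symm
      have hanti : ∀ J : Finset ι, Antitone (fun S => Real.exp (-s * cnt J A S)) := by
        intro J S T h
        apply Real.exp_le_exp.2
        have := cnt_mono J A h
        nlinarith
      have h1 := janson_step hp0 hp1 (A i) (fun S => Real.exp (-s * cnt I1 A S))
        (fun S => Real.exp (-s * cnt I2 A S)) (fun S => (Real.exp_pos _).le)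
        (fun S => (Real.exp_pos _).le) (hanti I1) (hanti I2) (by
          intro a ha S
          have : cnt I2 A (insert a S) = cnt I2 A S := by
            apply Finset.sum_congr rfl
            intro j hj
            have hj2 := (Finset.mem_filter.1 hj).2
            have haj : a ∉ A j := fun h => hj2 ⟨a, Finset.mem_inter.2 ⟨ha, h⟩⟩
            simp only [Finset.subset_insert_iff_of_notMem haj]
          simp only [this])
      have h2 : Ψ ≤ ∑ S : Finset E, wt p S * Real.exp (-s * cnt I2 A S) := by
        apply Finset.sum_le_sum
        intro S _
        apply mul_le_mul_of_nonneg_left _ (wt_nonneg hp0.le hp1 S)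
        apply Real.exp_le_exp.2
        have := cnt_nonneg I1 A S
        rw [hsplit]
        nlinarith
      have h3 : p ^ (A i).card - s * ∑ j ∈ I1, p ^ (A i ∪ A j).card ≤
          ∑ S : Finset E, wt p S * (if A i ⊆ S then Real.exp (-s * cnt I1 A S) else 0) := by
        have e1 : p ^ (A i).card - s * ∑ j ∈ I1, p ^ (A i ∪ A j).card =
            ∑ S : Finset E, wt p S * (if A i ⊆ S then 1 - s * cnt I1 A S else 0) := by
          rw [← wt_supset p (A i)]
          simp_rw [← wt_supset p (A i ∪ A _)]
          rw [Finset.sum_comm, Finset.mul_sum, ← Finset.sum_sub_distrib]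
          apply Finset.sum_congr rfl
          intro S _
          simp only [Finset.union_subset_iff]
          by_cases h : A i ⊆ S
          · simp only [h, true_and, if_true, cnt, ← Finset.mul_sum]
            ring
          · simp [h]
        rw [e1]
        apply Finset.sum_le_sum
        intro S _
        apply mul_le_mul_of_nonneg_left _ (wt_nonneg hp0.le hp1 S)
        split_ifs
        · have := Real.add_one_le_exp (-s * cnt I1 A S)
          linarith
        · exact le_rfl
      have h3' : 0 ≤ ∑ S : Finset E, wt p S * (if A i ⊆ S then Real.exp (-s * cnt I1 A S) else 0) :=
        Finset.sum_nonneg (fun S _ => mul_nonneg (wt_nonneg hp0.le hp1 S) (by positivity))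
      calc _ ≤ (∑ S : Finset E, wt p S * (if A i ⊆ S then Real.exp (-s * cnt I1 A S) else 0)) * Ψ :=
            mul_le_mul_of_nonneg_right h3 hΨ0
        _ ≤ _ := mul_le_mul_of_nonneg_left h2 h3'
        _ ≤ _ := h1
        _ = _ := by
          apply Finset.sum_congr rfl
          intro S _
          rw [← Real.exp_add, hsplit, mul_add]

lemma janson_mgf {E ι : Type*} [Fintype E] {p : ℝ} (hp0 : 0 < p) (hp1 : p ≤ 1)
    (I : Finset ι) (A : ι → Finset E) (s : ℝ) (hs : 0 ≤ s) (D : ℝ)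
    (hD : ∑ i ∈ I, ∑ j ∈ I.filter (fun j => (A i ∩ A j).Nonempty), p ^ (A i ∪ A j).card ≤ D) :
    ∑ S : Finset E, wt p S * Real.exp (-s * cnt I A S) ≤
      Real.exp (-s * (∑ i ∈ I, p ^ (A i).card) + s ^ 2 * D / 2) := by
  set M := ∑ i ∈ I, p ^ (A i).card with hM
  let F : ℝ → ℝ := fun t => (∑ S : Finset E, wt p S * Real.exp (-t * cnt I A S)) *
    Real.exp (t * M - t ^ 2 * D / 2)
  have hder : ∀ t, HasDerivAt F
      ((∑ S : Finset E, wt p S * (Real.exp (-t * cnt I A S) * (-1 * cnt I A S))) *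
        Real.exp (t * M - t ^ 2 * D / 2) +
      (∑ S : Finset E, wt p S * Real.exp (-t * cnt I A S)) *
        (Real.exp (t * M - t ^ 2 * D / 2) * (1 * M - (2 * t ^ 1 * 1) * D / 2))) t := by
    intro t
    apply HasDerivAt.mul
    · apply HasDerivAt.fun_sum
      intro S _
      apply HasDerivAt.const_mul
      apply HasDerivAt.exp
      exact ((hasDerivAt_id t).neg).mul_const _
    · apply HasDerivAt.exp
      apply HasDerivAt.sub
      · exact (hasDerivAt_id t).mul_const _
      · exact (((hasDerivAt_id t).pow 2).mul_const D).div_const 2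
  have hanti : AntitoneOn F (Set.Ici 0) := by
    apply antitoneOn_of_deriv_nonpos (convex_Ici 0)
    · exact fun t _ => (hder t).continuousAt.continuousWithinAt
    · exact fun t _ => (hder t).differentiableAt.differentiableWithinAt
    · intro t ht
      rw [interior_Ici] at ht
      rw [(hder t).deriv]
      have h := janson_deriv hp0 hp1 I A t (le_of_lt ht) D hD
      have e : ∑ S : Finset E, wt p S * (Real.exp (-t * cnt I A S) * (-1 * cnt I A S)) =
        - ∑ S : Finset E, wt p S * (cnt I A S * Real.exp (-t * cnt I A S)) := by
        rw [← Finset.sum_neg_distrib]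
        apply Finset.sum_congr rfl
        intro S _
        ring
      rw [e]
      have := Real.exp_pos (t * M - t ^ 2 * D / 2)
      have h' := mul_le_mul_of_nonneg_right h this.le
      rw [← hM] at h'
      linarith
  have h := hanti (Set.mem_Ici.2 le_rfl) (Set.mem_Ici.2 hs) hs
  simp only [F] at h
  simp only [neg_zero, zero_mul, Real.exp_zero, mul_one, wt_sum] at h
  norm_num at h
  have e : Real.exp (-s * M + s ^ 2 * D / 2) = (Real.exp (s * M - s ^ 2 * D / 2))⁻¹ := by
    rw [← Real.exp_neg]; congr 1; ring
  rw [e, ← one_div, le_div_iff₀ (Real.exp_pos _)]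
  simpa using h

lemma janson {E ι : Type*} [Fintype E] {p : ℝ} (hp0 : 0 < p) (hp1 : p ≤ 1)
    (I : Finset ι) (A : ι → Finset E) (D M : ℝ) (hD0 : 0 < D) (hM0 : 0 ≤ M)
    (hM : ∑ i ∈ I, p ^ (A i).card = M)
    (hD : ∑ i ∈ I, ∑ j ∈ I.filter (fun j => (A i ∩ A j).Nonempty), p ^ (A i ∪ A j).card ≤ D) :
    ∑ S : Finset E, wt p S * (if cnt I A S < M / 2 then 1 else 0) ≤
      Real.exp (- (M ^ 2 / (8 * D))) := by
  set s := M / (2 * D) with hs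
  have hs0 : 0 ≤ s := by positivity
  have h := janson_mgf hp0 hp1 I A s hs0 D hD
  rw [hM] at h
  calc _ ≤ ∑ S : Finset E, wt p S * (Real.exp (s * M / 2) * Real.exp (-s * cnt I A S)) := by
        apply Finset.sum_le_sum
        intro S _
        apply mul_le_mul_of_nonneg_left _ (wt_nonneg hp0.le hp1 S)
        rw [← Real.exp_add]
        split_ifs with hc
        · apply Real.one_le_exp
          nlinarith
        · positivity
    _ = Real.exp (s * M / 2) * ∑ S : Finset E, wt p S * Real.exp (-s * cnt I A S) := by
        rw [Finset.mul_sum]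
        apply Finset.sum_congr rfl
        intro S _
        ring
    _ ≤ Real.exp (s * M / 2) * Real.exp (-s * M + s ^ 2 * D / 2) := by gcongr
    _ = _ := by
        rw [← Real.exp_add]
        congr 1
        rw [hs]
        field_simp
        ring

@[ext] structure Edg (n : ℕ) where
  val : Sym2 (Fin n)
  property : ¬ val.IsDiag

lemma Edg.val_injective {n : ℕ} : Function.Injective (Edg.val (n := n)) :=
  fun _ _ h => Edg.ext h

def edgEquiv (n : ℕ) : {e : Sym2 (Fin n) // ¬ e.IsDiag} ≃ Edg n where
  toFun x := ⟨x.1, x.2⟩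
  invFun x := ⟨x.1, x.2⟩

noncomputable instance (n : ℕ) : Fintype (Edg n) := Fintype.ofEquiv _ (edgEquiv n)

noncomputable def gr {n : ℕ} (S : Finset (Edg n)) : SimpleGraph (Fin n) :=
  SimpleGraph.fromEdgeSet (Edg.val '' (S : Set (Edg n)))

lemma gr_edgeSet {n : ℕ} (S : Finset (Edg n)) :
    (gr S).edgeSet = Edg.val '' (S : Set (Edg n)) := by
  unfold gr
  rw [SimpleGraph.edgeSet_fromEdgeSet]
  ext e
  simp only [Set.mem_sdiff, Set.mem_image, and_iff_left_iff_imp]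
  rintro ⟨x, _, rfl⟩
  exact x.2

noncomputable def grEquiv (n : ℕ) : Finset (Edg n) ≃ SimpleGraph (Fin n) where
  toFun := gr
  invFun G := univ.filter (fun e => e.1 ∈ G.edgeSet)
  left_inv S := by
    ext e
    simp only [gr_edgeSet, Finset.mem_filter, Finset.mem_univ, true_and,
      Edg.val_injective.mem_set_image, Finset.mem_coe]
  right_inv G := by
    apply SimpleGraph.edgeSet_injective
    rw [gr_edgeSet]
    ext e
    simp only [Set.mem_image, Finset.coe_filter, Finset.mem_univ, true_and, Set.mem_ofPred_eq]
    constructor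
    · rintro ⟨x, hx, rfl⟩
      exact hx
    · intro h
      exact ⟨⟨e, G.not_isDiag_of_mem_edgeSet h⟩, h, rfl⟩

lemma erProb_eq (n : ℕ) (p : ℝ) (A : SimpleGraph (Fin n) → Prop) :
    erProb n p A = ∑ S : Finset (Edg n), wt p S * (if A (gr S) then 1 else 0) := by
  unfold erProb
  rw [tsum_fintype]
  symm
  apply Fintype.sum_equiv (grEquiv n)
  intro S
  have h1 : (gr S).edgeSet.ncard = S.card := by
    rw [gr_edgeSet, Set.ncard_image_of_injective _ Edg.val_injective, Set.ncard_coe_finset]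
  have h2 : Fintype.card (Edg n) = n.choose 2 := by
    have := Sym2.card_subtype_not_diag (α := Fin n)
    rw [Fintype.card_fin] at this
    rw [← this]
    exact Fintype.card_congr (edgEquiv n).symm
  change _ = if A (gr S) then p ^ (gr S).edgeSet.ncard *
    (1 - p) ^ (n.choose 2 - (gr S).edgeSet.ncard) else 0
  rw [h1, wt, h2]
  split_ifs <;> simp

noncomputable def cyc {n : ℕ} {ι : Type*} [Fintype ι] (σ : ι → ι) (v : ι → Fin n) :
    Finset (Edg n) :=
  univ.filter (fun e => e.val ∈ univ.image (fun i => s(v i, v (σ i))))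

lemma cyc_subset {n : ℕ} {ι : Type*} [Fintype ι] (σ : ι → ι) (v : ι → Fin n)
    (hv : ∀ i, v i ≠ v (σ i)) (S : Finset (Edg n)) :
    cyc σ v ⊆ S ↔ ∀ i, (gr S).Adj (v i) (v (σ i)) := by
  have h : ∀ i, (gr S).Adj (v i) (v (σ i)) ↔ ∃ x ∈ S, x.1 = s(v i, v (σ i)) := by
    intro i
    rw [← SimpleGraph.mem_edgeSet, gr_edgeSet]
    simp
  simp only [h]
  constructor
  · intro hs i
    refine ⟨⟨s(v i, v (σ i)), by simpa using hv i⟩, hs ?_, rfl⟩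
    exact Finset.mem_filter.2 ⟨Finset.mem_univ _, Finset.mem_image_of_mem _ (Finset.mem_univ i)⟩
  · intro hs x hx
    simp only [cyc, Finset.mem_filter, Finset.mem_image, Finset.mem_univ, true_and] at hx
    obtain ⟨i, hi⟩ := hx
    obtain ⟨y, hy, hy2⟩ := hs i
    have : y = x := Edg.ext (hy2.trans hi)
    exact this ▸ hy

lemma edge_eq {n : ℕ} {ι : Type*} {σ : ι → ι} (h2 : ∀ i, σ (σ i) ≠ i)
    {V : ι → Finset (Fin n)} (hV : ∀ i j, i ≠ j → Disjoint (V i) (V j))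
    {v u : ι → Fin n} (hv : ∀ i, v i ∈ V i) (hu : ∀ i, u i ∈ V i) {i j : ι}
    (h : s(v i, v (σ i)) = s(u j, u (σ j))) :
    i = j ∧ v i = u i ∧ v (σ i) = u (σ i) := by
  have hd : ∀ i j, v i = u j → i = j := by
    intro i j h
    by_contra hne
    exact Finset.disjoint_left.1 (hV i j hne) (hv i) (h ▸ hu j)
  rcases Sym2.eq_iff.1 h with ⟨a, b⟩ | ⟨a, b⟩
  · have := hd _ _ a
    subst this
    exact ⟨rfl, a, b⟩
  · have h3 := hd _ _ a
    have h4 := hd _ _ b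
    rw [h3] at h4
    exact absurd h4 (h2 j)

lemma card_cyc {n : ℕ} {ι : Type*} [Fintype ι] {σ : ι → ι} (h1 : ∀ i, σ i ≠ i)
    (h2 : ∀ i, σ (σ i) ≠ i)
    {V : ι → Finset (Fin n)} (hV : ∀ i j, i ≠ j → Disjoint (V i) (V j))
    {v : ι → Fin n} (hv : ∀ i, v i ∈ V i) : (cyc σ v).card = Fintype.card ι := by
  have hne : ∀ i, ¬ (s(v i, v (σ i))).IsDiag := by
    intro i
    simp only [Sym2.mk_isDiag_iff]
    intro h
    exact Finset.disjoint_left.1 (hV i (σ i) (h1 i).symm) (hv i) (h ▸ hv (σ i))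
  have e : cyc σ v = univ.image (fun i => (⟨s(v i, v (σ i)), hne i⟩ : Edg n)) := by
    ext x
    simp only [cyc, Finset.mem_filter, Finset.mem_image, Finset.mem_univ, true_and, Edg.ext_iff]
  rw [e, Finset.card_image_of_injective, Finset.card_univ]
  intro i j h
  exact (edge_eq h2 hV hv hv (congrArg Edg.val h)).1

lemma card_cyc_inter {n : ℕ} {ι : Type*} [Fintype ι] {σ : ι → ι}
    (h2 : ∀ i, σ (σ i) ≠ i)
    {V : ι → Finset (Fin n)} (hV : ∀ i j, i ≠ j → Disjoint (V i) (V j))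
    {v u : ι → Fin n} (hv : ∀ i, v i ∈ V i) (hu : ∀ i, u i ∈ V i) :
    (cyc σ v ∩ cyc σ u).card ≤
      (univ.filter (fun i => v i = u i ∧ v (σ i) = u (σ i))).card := by
  rw [← Finset.card_map ⟨Edg.val, Edg.val_injective⟩]
  refine le_trans (Finset.card_le_card ?_) (Finset.card_image_le (f := fun i => s(v i, v (σ i))))
  intro x hx
  simp only [Finset.mem_map, Finset.mem_inter, cyc, Finset.mem_filter, Finset.mem_image,
    Finset.mem_univ, true_and, Function.Embedding.coeFn_mk] at hx
  obtain ⟨y, ⟨⟨i, hi⟩, ⟨j, hj⟩⟩, rfl⟩ := hx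
  rw [Finset.mem_image]
  exact ⟨i, by simpa using (edge_eq h2 hV hv hu (hi.trans hj.symm)).2, hi⟩

lemma union_card {ι : Type*} [Fintype ι] {σ : ι → ι}
    (ht : ∀ J : Finset ι, J.Nonempty → (∀ i ∈ J, σ i ∈ J) → J = univ)
    (J : Finset ι) (hJ : J.Nonempty) (hJ' : J ≠ univ) :
    J.card + 1 ≤ (J ∪ J.image σ).card := by
  apply Finset.card_lt_card
  refine Finset.ssubset_iff_subset_ne.2 ⟨Finset.subset_union_left, fun h => hJ' (ht J hJ ?_)⟩
  intro i hi
  rw [h]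
  exact Finset.mem_union_right _ (Finset.mem_image_of_mem _ hi)

lemma J_bound {ι : Type*} [Fintype ι] {σ : ι → ι}
    (ht : ∀ J : Finset ι, J.Nonempty → (∀ i ∈ J, σ i ∈ J) → J = univ)
    (J : Finset ι) (hJ : J.Nonempty) {p m K : ℝ} (hp0 : 0 < p) (hm : 1 ≤ m) (hK : 1 ≤ K)
    (hpm : K ≤ p * m) (hpm2 : m * K ≤ p ^ Fintype.card ι * m ^ Fintype.card ι) :
    m * K ≤ p ^ J.card * m ^ (J ∪ J.image σ).card := by
  by_cases h : J = univ
  · subst h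
    have : (univ : Finset ι) ∪ univ.image σ = univ := by simp
    rw [this]
    simpa using hpm2
  · have h1 := union_card ht J hJ h
    have h2 : K ≤ (p * m) ^ J.card := hpm.trans
      (le_self_pow₀ (hK.trans hpm) (Finset.card_pos.2 hJ).ne')
    calc m * K ≤ m * (p * m) ^ J.card := by gcongr
      _ = p ^ J.card * m ^ (J.card + 1) := by rw [mul_pow]; ring
      _ ≤ _ := by gcongr

lemma agree_count {n : ℕ} {ι : Type*} [Fintype ι] (V : ι → Finset (Fin n)) (v : ι → Fin n)
    (hv : ∀ i, v i ∈ V i) (T : Finset ι) {m : ℝ} (hm : 0 ≤ m) (hVm : ∀ i, m ≤ ((V i).card : ℝ)) :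
    (((Fintype.piFinset V).filter (fun u => ∀ i ∈ T, v i = u i)).card : ℝ) * m ^ T.card ≤
      ∏ i, ((V i).card : ℝ) := by
  have h1 : ((Fintype.piFinset V).filter (fun u => ∀ i ∈ T, v i = u i)) ⊆
      Fintype.piFinset (fun i => if i ∈ T then {v i} else V i) := by
    intro u hu
    simp only [Finset.mem_filter, Fintype.mem_piFinset] at hu
    rw [Fintype.mem_piFinset]
    intro i
    by_cases hi : i ∈ T
    · simp [hi, hu.2 i hi]
    · simp [hi, hu.1 i]
  have h2 := Finset.card_le_card h1
  rw [Fintype.card_piFinset] at h2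
  have h3 : m ^ T.card = ∏ i, if i ∈ T then m else 1 := by
    rw [Finset.prod_ite_mem]; simp
  calc _ ≤ ((∏ i, (if i ∈ T then {v i} else V i).card : ℕ) : ℝ) * m ^ T.card := by
        gcongr
    _ ≤ _ := by
        rw [h3]
        push_cast
        rw [← Finset.prod_mul_distrib]
        apply Finset.prod_le_prod
        · intro i _
          split_ifs <;> positivity
        · intro i _
          by_cases hi : i ∈ T
          · simp [hi, hVm i]
          · simp [hi]

lemma delta_bound {n : ℕ} {ι : Type*} [Fintype ι] {σ : ι → ι} (h1 : ∀ i, σ i ≠ i)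
    (h2 : ∀ i, σ (σ i) ≠ i)
    (ht : ∀ J : Finset ι, J.Nonempty → (∀ i ∈ J, σ i ∈ J) → J = univ)
    {V : ι → Finset (Fin n)} (hV : ∀ i j, i ≠ j → Disjoint (V i) (V j))
    {p m K : ℝ} (hp0 : 0 < p) (hp1 : p ≤ 1) (hm : 1 ≤ m) (hK : 1 ≤ K)
    (hVm : ∀ i, m ≤ ((V i).card : ℝ))
    (hpm : K ≤ p * m) (hpm2 : m * K ≤ p ^ Fintype.card ι * m ^ Fintype.card ι) :
    ∑ v ∈ Fintype.piFinset V,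
      ∑ u ∈ (Fintype.piFinset V).filter (fun u => (cyc σ v ∩ cyc σ u).Nonempty),
        p ^ (cyc σ v ∪ cyc σ u).card ≤
      2 ^ Fintype.card ι * (p ^ Fintype.card ι * ∏ i, ((V i).card : ℝ)) ^ 2 / (m * K) := by
  set P := ∏ i, ((V i).card : ℝ) with hP
  set L := Fintype.card ι with hL
  have hmK : 0 < m * K := by positivity
  have hP0 : 0 ≤ P := Finset.prod_nonneg (fun i _ => by positivity)
  clear_value P
  have inner : ∀ v ∈ Fintype.piFinset V,
      ∑ u ∈ (Fintype.piFinset V).filter (fun u => (cyc σ v ∩ cyc σ u).Nonempty),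
        p ^ (cyc σ v ∪ cyc σ u).card ≤ 2 ^ L * (p ^ (2 * L) * P / (m * K)) := by
    intro v hv
    have hv' := Fintype.mem_piFinset.1 hv
    have step : ∀ J ∈ (univ : Finset (Finset ι)).filter (fun J => J.Nonempty),
        ∑ u ∈ (Fintype.piFinset V).filter (fun u => ∀ i ∈ J ∪ J.image σ, v i = u i),
          p ^ (2 * L - J.card) ≤ p ^ (2 * L) * P / (m * K) := by
      intro J hJ
      have hJ' := (Finset.mem_filter.1 hJ).2
      have a1 := J_bound ht J hJ' hp0 hm hK hpm hpm2
      have a2 := agree_count V v hv' (J ∪ J.image σ) (by linarith : (0:ℝ) ≤ m) hVm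
      rw [← hP] at a2
      rw [Finset.sum_const, nsmul_eq_mul, le_div_iff₀ hmK]
      set c : ℝ := (((Fintype.piFinset V).filter
        (fun u => ∀ i ∈ J ∪ J.image σ, v i = u i)).card : ℝ) with hc
      have hJL : J.card ≤ 2 * L := by
        have := Finset.card_le_univ J
        omega
      calc c * p ^ (2 * L - J.card) * (m * K) ≤
            c * p ^ (2 * L - J.card) * (p ^ J.card * m ^ (J ∪ J.image σ).card) := by gcongr
        _ = (p ^ (2 * L - J.card) * p ^ J.card) * (c * m ^ (J ∪ J.image σ).card) := by ring
        _ = p ^ (2 * L) * (c * m ^ (J ∪ J.image σ).card) := by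
            rw [← pow_add, Nat.sub_add_cancel hJL]
        _ ≤ p ^ (2 * L) * P := by gcongr
    have hq : 0 ≤ p ^ (2 * L) * P / (m * K) := by positivity
    calc _ ≤ ∑ u ∈ (Fintype.piFinset V).filter (fun u => (cyc σ v ∩ cyc σ u).Nonempty),
          ∑ J ∈ (univ : Finset (Finset ι)).filter (fun J => J.Nonempty),
            if (∀ i ∈ J ∪ J.image σ, v i = u i) then p ^ (2 * L - J.card) else 0 := by
          apply Finset.sum_le_sum
          intro u hu
          rw [Finset.mem_filter] at hu
          have hu' := Fintype.mem_piFinset.1 hu.1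
          have b1 := card_cyc_inter h2 hV hv' hu'
          set J0 := univ.filter (fun i => v i = u i ∧ v (σ i) = u (σ i)) with hJ0
          have b2 := Finset.card_union_add_card_inter (cyc σ v) (cyc σ u)
          rw [card_cyc h1 h2 hV hv', card_cyc h1 h2 hV hu'] at b2
          have b3 := Finset.card_pos.2 hu.2
          have b4 : J0.Nonempty := Finset.card_pos.1 (by omega)
          have b5 : ∀ i ∈ J0 ∪ J0.image σ, v i = u i := by
            intro i hi
            rcases Finset.mem_union.1 hi with h | h
            · exact ((Finset.mem_filter.1 h).2).1
            · obtain ⟨j, hj, rfl⟩ := Finset.mem_image.1 h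
              exact ((Finset.mem_filter.1 hj).2).2
          calc p ^ (cyc σ v ∪ cyc σ u).card ≤ p ^ (2 * L - J0.card) :=
                pow_le_pow_of_le_one hp0.le hp1 (by omega)
            _ = if (∀ i ∈ J0 ∪ J0.image σ, v i = u i) then p ^ (2 * L - J0.card) else 0 := by
                rw [if_pos b5]
            _ ≤ _ := Finset.single_le_sum
                (f := fun J : Finset ι =>
                  if (∀ i ∈ J ∪ J.image σ, v i = u i) then p ^ (2 * L - J.card) else 0)
                (fun J _ => by positivity) (Finset.mem_filter.2 ⟨Finset.mem_univ _, b4⟩)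
      _ ≤ ∑ u ∈ Fintype.piFinset V,
          ∑ J ∈ (univ : Finset (Finset ι)).filter (fun J => J.Nonempty),
            if (∀ i ∈ J ∪ J.image σ, v i = u i) then p ^ (2 * L - J.card) else 0 := by
          apply Finset.sum_le_sum_of_subset_of_nonneg (Finset.filter_subset _ _)
          intro u _ _
          exact Finset.sum_nonneg (fun J _ => by positivity)
      _ = ∑ J ∈ (univ : Finset (Finset ι)).filter (fun J => J.Nonempty),
          ∑ u ∈ (Fintype.piFinset V).filter (fun u => ∀ i ∈ J ∪ J.image σ, v i = u i),
            p ^ (2 * L - J.card) := by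
          rw [Finset.sum_comm]
          apply Finset.sum_congr rfl
          intro J _
          rw [Finset.sum_filter]
      _ ≤ ∑ J ∈ (univ : Finset (Finset ι)).filter (fun J => J.Nonempty),
            p ^ (2 * L) * P / (m * K) := Finset.sum_le_sum step
      _ ≤ ∑ J : Finset ι, p ^ (2 * L) * P / (m * K) :=
          Finset.sum_le_sum_of_subset_of_nonneg (Finset.filter_subset _ _) (fun _ _ _ => hq)
      _ = _ := by simp [hL]
  calc _ ≤ ∑ v ∈ Fintype.piFinset V, 2 ^ L * (p ^ (2 * L) * P / (m * K)) :=
        Finset.sum_le_sum inner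
    _ = _ := by
        rw [Finset.sum_const, nsmul_eq_mul, Fintype.card_piFinset]
        push_cast
        rw [← hP]
        ring

lemma bad_bound {n : ℕ} {ι : Type*} [Fintype ι] {σ : ι → ι} (h1 : ∀ i, σ i ≠ i)
    (h2 : ∀ i, σ (σ i) ≠ i)
    (ht : ∀ J : Finset ι, J.Nonempty → (∀ i ∈ J, σ i ∈ J) → J = univ)
    {V : ι → Finset (Fin n)} (hV : ∀ i j, i ≠ j → Disjoint (V i) (V j))
    {p m K : ℝ} (hp0 : 0 < p) (hp1 : p ≤ 1) (hm : 1 ≤ m) (hK : 1 ≤ K)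
    (hVm : ∀ i, m ≤ ((V i).card : ℝ))
    (hpm : K ≤ p * m) (hpm2 : m * K ≤ p ^ Fintype.card ι * m ^ Fintype.card ι) :
    ∑ S : Finset (Edg n), wt p S * (if ((univ.filter fun v : ι → Fin n =>
      (∀ i, v i ∈ V i) ∧ ∀ i, (gr S).Adj (v i) (v (σ i))).card : ℝ) <
        1 / 2 * p ^ Fintype.card ι * ∏ i, ((V i).card : ℝ) then 1 else 0) ≤
      Real.exp (-(m * K / (8 * 2 ^ Fintype.card ι))) := by
  have hP : 0 < ∏ i, ((V i).card : ℝ) :=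
    Finset.prod_pos (fun i _ => by linarith [hVm i])
  set M := p ^ Fintype.card ι * ∏ i, ((V i).card : ℝ) with hM
  have hM0 : 0 < M := mul_pos (pow_pos hp0 _) hP
  clear_value M
  have h := janson hp0 hp1 (Fintype.piFinset V) (cyc σ)
    (2 ^ Fintype.card ι * M ^ 2 / (m * K)) M (by positivity) hM0.le (by
      rw [Finset.sum_congr rfl (fun v hv => by
        rw [card_cyc h1 h2 hV (Fintype.mem_piFinset.1 hv)])]
      rw [Finset.sum_const, nsmul_eq_mul, Fintype.card_piFinset, hM]
      push_cast
      ring)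
    (by
      have := delta_bound h1 h2 ht hV hp0 hp1 hm hK hVm hpm hpm2
      rw [← hM] at this
      convert this)
  have e : M ^ 2 / (8 * (2 ^ Fintype.card ι * M ^ 2 / (m * K))) =
      m * K / (8 * 2 ^ Fintype.card ι) := by
    field_simp
  rw [e] at h
  refine le_trans (le_of_eq ?_) h
  apply Finset.sum_congr rfl
  intro S _
  have e2 : ((univ.filter fun v : ι → Fin n =>
      (∀ i, v i ∈ V i) ∧ ∀ i, (gr S).Adj (v i) (v (σ i))).card : ℝ) =
      cnt (Fintype.piFinset V) (cyc σ) S := by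
    rw [cnt, Finset.sum_boole]
    congr 2
    ext v
    simp only [Finset.mem_filter, Finset.mem_univ, true_and, Fintype.mem_piFinset]
    apply and_congr_right
    intro hv
    rw [cyc_subset]
    intro i h
    exact Finset.disjoint_left.1 (hV i (σ i) (h1 i).symm) (hv i) (h ▸ hv (σ i))
  have e3 : 1 / 2 * p ^ Fintype.card ι * ∏ i, ((V i).card : ℝ) = M / 2 := by rw [hM]; ring
  rw [e2, e3]

lemma sigma_props (ℓ : ℕ) (hℓ : 3 ≤ ℓ) :
    ∃ σ : Fin ℓ → Fin ℓ, (∀ i : Fin ℓ, σ i = i + ⟨1 % ℓ, Nat.mod_lt 1 i.pos⟩) ∧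
      (∀ i, σ i ≠ i) ∧ (∀ i, σ (σ i) ≠ i) ∧
      (∀ J : Finset (Fin ℓ), J.Nonempty → (∀ i ∈ J, σ i ∈ J) → J = univ) := by
  obtain ⟨k, rfl⟩ := Nat.exists_eq_add_of_le' hℓ
  refine ⟨fun i => i + 1, fun i => ?_, fun i => ?_, fun i => ?_, ?_⟩
  · congr 1
  · simp
  · change i + 1 + 1 ≠ i
    rw [add_assoc]
    simp only [ne_eq, add_eq_left]
    intro h
    have := congrArg Fin.val h
    rw [Fin.val_add] at this
    simp at this
    rw [Nat.mod_eq_of_lt (by omega)] at this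
    omega
  · rintro J ⟨j, hj⟩ hJ
    have key : ∀ t : ℕ, j + Fin.ofNat (k + 3) t ∈ J := by
      intro t
      induction t with
      | zero => simpa using hj
      | succ t ih =>
        have := hJ _ ih
        have e : Fin.ofNat (k + 3) (t + 1) = Fin.ofNat (k + 3) t + 1 := by
          apply Fin.ext
          simp [Fin.val_add]
        rw [e, ← add_assoc]
        exact this
    ext i
    simp only [Finset.mem_univ, iff_true]
    have := key (i - j).val
    have e : Fin.ofNat (k + 3) (i - j).val = i - j := by
      apply Fin.ext
      simp
    rw [e] at this
    simpa using this

lemma finite_bound {ℓ : ℕ} (hℓ : 3 ≤ ℓ) {ε : ℝ} {n : ℕ}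
    {p K : ℝ} (hp0 : 0 < p) (hp1 : p ≤ 1) (hm : 1 ≤ ε * n / ℓ) (hK : 1 ≤ K)
    (hpm : K ≤ p * (ε * n / ℓ)) (hpm2 : (ε * n / ℓ) * K ≤ p ^ ℓ * (ε * n / ℓ) ^ ℓ) :
    1 - (2 ^ n) ^ ℓ * Real.exp (-((ε * n / ℓ) * K / (8 * 2 ^ ℓ))) ≤
    erProb n p (fun G =>
        ∀ V : Fin ℓ → Finset (Fin n),
          (∀ i j, i ≠ j → Disjoint (V i) (V j)) →
          (∀ i, ε * n / ℓ ≤ ((V i).card : ℝ)) →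
          1 / 2 * p ^ ℓ * ∏ i, ((V i).card : ℝ) ≤ (cyclesBetween G ℓ V : ℝ)) := by
  obtain ⟨σ, hσ, h1, h2, ht⟩ := sigma_props ℓ hℓ
  set m := ε * n / ℓ with hmdef
  generalize hQ : (fun G : SimpleGraph (Fin n) => ∀ V : Fin ℓ → Finset (Fin n),
          (∀ i j, i ≠ j → Disjoint (V i) (V j)) →
          (∀ i, m ≤ ((V i).card : ℝ)) →
          1 / 2 * p ^ ℓ * ∏ i, ((V i).card : ℝ) ≤ (cyclesBetween G ℓ V : ℝ)) = Q
  rw [erProb_eq]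
  let bad : (Fin ℓ → Finset (Fin n)) → Finset (Edg n) → ℝ := fun V S =>
    if ((∀ i j, i ≠ j → Disjoint (V i) (V j)) ∧ (∀ i, m ≤ ((V i).card : ℝ))) ∧
      (cyclesBetween (gr S) ℓ V : ℝ) < 1 / 2 * p ^ ℓ * ∏ i, ((V i).card : ℝ) then 1 else 0
  have hb : ∀ V, ∑ S, wt p S * bad V S ≤ Real.exp (-(m * K / (8 * 2 ^ ℓ))) := by
    intro V
    by_cases hV : (∀ i j, i ≠ j → Disjoint (V i) (V j)) ∧ (∀ i, m ≤ ((V i).card : ℝ))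
    · have := bad_bound (p := p) (m := m) (K := K) h1 h2 ht hV.1 hp0 hp1 hm hK hV.2 hpm
        (by simpa using hpm2)
      rw [Fintype.card_fin] at this
      refine le_trans (le_of_eq ?_) this
      apply Finset.sum_congr rfl
      intro S _
      congr 1
      apply if_congr _ rfl rfl
      rw [and_iff_right hV]
      simp only [cyclesBetween, hσ]
      convert Iff.rfl
    · have : ∑ S, wt p S * bad V S = 0 := by
        apply Finset.sum_eq_zero
        intro S _
        simp only [bad, hV, false_and, if_false, mul_zero]
      rw [this]
      positivity
  have hsum : ∑ V, ∑ S, wt p S * bad V S ≤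
      (2 ^ n) ^ ℓ * Real.exp (-(m * K / (8 * 2 ^ ℓ))) := by
    calc _ ≤ ∑ V : Fin ℓ → Finset (Fin n), Real.exp (-(m * K / (8 * 2 ^ ℓ))) :=
          Finset.sum_le_sum (fun V _ => hb V)
      _ = _ := by simp
  rw [Finset.sum_comm] at hsum
  have hmain : ∑ S : Finset (Edg n), wt p S ≤ ∑ S : Finset (Edg n), wt p S * (if Q (gr S) then 1 else 0) +
        ∑ S, ∑ V, wt p S * bad V S := by
    rw [← Finset.sum_add_distrib]
    apply Finset.sum_le_sum
    intro S _
    rw [← Finset.mul_sum, ← mul_add]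
    apply le_mul_of_one_le_right (wt_nonneg hp0.le hp1 S)
    have hbn : ∀ V, 0 ≤ bad V S := fun V => by simp only [bad]; positivity
    split_ifs with h
    · have : 0 ≤ ∑ V, bad V S := Finset.sum_nonneg (fun V _ => hbn V)
      linarith
    · rw [← hQ] at h
      push Not at h
      obtain ⟨V, a, b, c⟩ := h
      have h3 : bad V S = 1 := if_pos ⟨⟨a, b⟩, c⟩
      have := Finset.single_le_sum (f := fun V => bad V S) (fun V _ => hbn V) (Finset.mem_univ V)
      simp only [h3] at this
      linarith
  rw [wt_sum] at hmain
  linarith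

lemma erProb_le_one {n : ℕ} {p : ℝ} (hp0 : 0 ≤ p) (hp1 : p ≤ 1)
    (A : SimpleGraph (Fin n) → Prop) : erProb n p A ≤ 1 := by
  rw [erProb_eq]
  refine le_trans ?_ (wt_sum (E := Edg n) p).le
  apply Finset.sum_le_sum
  intro S _
  apply mul_le_of_le_one_right (wt_nonneg hp0 hp1 S)
  split_ifs
  · exact le_rfl
  · exact zero_le_one

/-- For an integer `ℓ ≥ 3`, `ε > 0`, and `p = ω(n^{-(ℓ-1)/ℓ})`, a.a.s. in `G(n,p)`:
for every choice of pairwise disjoint vertex sets `V₁, …, V_ℓ` each of size at least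
`εn/ℓ`, the number of cycles `v₁ ⋯ v_ℓ` with `v_i ∈ V_i` is at least
`(1/2) p^ℓ ∏ |V_i|`. -/
theorem aas_many_cycles_between_sets
    (ℓ : ℕ) (hℓ : 3 ≤ ℓ) (ε : ℝ) (hε : 0 < ε) (p : ℕ → ℝ)
    (hp0 : ∀ n, 0 ≤ p n) (hp1 : ∀ n, p n ≤ 1)
    (hp : Tendsto (fun n : ℕ => p n * (n : ℝ) ^ (((ℓ : ℝ) - 1) / (ℓ : ℝ))) atTop atTop) :
    Tendsto (fun n : ℕ => erProb n (p n) (fun G =>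
        ∀ V : Fin ℓ → Finset (Fin n),
          (∀ i j, i ≠ j → Disjoint (V i) (V j)) →
          (∀ i, ε * n / ℓ ≤ ((V i).card : ℝ)) →
          1 / 2 * (p n) ^ ℓ * ∏ i, ((V i).card : ℝ) ≤ (cyclesBetween G ℓ V : ℝ)))
      atTop (nhds 1) := by
  have hℓ0 : (0 : ℝ) < ℓ := by positivity
  set c : ℝ := ε / ℓ with hc
  have hc0 : 0 < c := by positivity
  set K : ℝ := max 1 ((ℓ + 1) * (8 * 2 ^ ℓ) / c) with hKdef
  have hK1 : 1 ≤ K := le_max_left _ _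
  have hK2 : (ℓ + 1) * (8 * 2 ^ ℓ) ≤ c * K := by
    have := le_max_right 1 ((ℓ + 1) * (8 * 2 ^ ℓ) / c)
    rw [← hKdef, div_le_iff₀ hc0] at this
    linarith
  set R : ℝ := max 1 (max (K / c) (K / c ^ (ℓ - 1))) with hR
  have hev1 := hp.eventually_ge_atTop R
  have hev2 : ∀ᶠ n : ℕ in atTop, 1 / c ≤ (n : ℝ) :=
    tendsto_natCast_atTop_atTop.eventually_ge_atTop _
  have hlim : Tendsto (fun n : ℕ => 1 - Real.exp (-(n : ℝ))) atTop (nhds 1) := by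
    have : Tendsto (fun n : ℕ => Real.exp (-(n : ℝ))) atTop (nhds 0) :=
      Real.tendsto_exp_neg_atTop_nhds_zero.comp tendsto_natCast_atTop_atTop
    simpa using this.const_sub 1
  refine tendsto_of_tendsto_of_tendsto_of_le_of_le' hlim tendsto_const_nhds ?_
    (Eventually.of_forall (fun n => erProb_le_one (hp0 n) (hp1 n) _))
  filter_upwards [hev1, hev2, eventually_ge_atTop 1] with n hn1 hn2 hn3
  have hn : (1 : ℝ) ≤ n := by exact_mod_cast hn3
  have hm : ε * n / ℓ = c * n := by rw [hc]; ring
  set x := (n : ℝ) ^ (((ℓ : ℝ) - 1) / (ℓ : ℝ)) with hx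
  have hx0 : 0 < x := Real.rpow_pos_of_pos (by linarith) _
  have hxn : x ≤ n := by
    calc x ≤ (n : ℝ) ^ (1 : ℝ) := by
          apply Real.rpow_le_rpow_of_exponent_le hn
          rw [div_le_one hℓ0]; linarith
      _ = n := Real.rpow_one _
  have hxl : x ^ ℓ = (n : ℝ) ^ (ℓ - 1) := by
    rw [hx, ← Real.rpow_natCast, ← Real.rpow_mul (by linarith), div_mul_cancel₀ _ hℓ0.ne',
      ← Real.rpow_natCast]
    congr 1
    rw [Nat.cast_sub (by omega)]
    simp
  have hR1 : 1 ≤ R := le_max_left _ _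
  have hR2 : K / c ≤ R := (le_max_left _ _).trans (le_max_right _ _)
  have hR3 : K / c ^ (ℓ - 1) ≤ R := (le_max_right _ _).trans (le_max_right _ _)
  have hpos : 0 < p n := by
    rcases (hp0 n).eq_or_lt with h | h
    · rw [← h] at hn1; linarith
    · exact h
  have c1 : 1 ≤ ε * n / ℓ := by
    rw [hm]
    rw [div_le_iff₀ hc0] at hn2
    linarith
  have c2 : K ≤ p n * (ε * n / ℓ) := by
    rw [hm]
    rw [div_le_iff₀ hc0] at hR2
    have : p n * x ≤ p n * n := by gcongr
    calc K ≤ R * c := hR2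
      _ ≤ (p n * n) * c := by gcongr; linarith
      _ = _ := by ring
  have c3 : (ε * n / ℓ) * K ≤ p n ^ ℓ * (ε * n / ℓ) ^ ℓ := by
    rw [hm]
    rw [div_le_iff₀ (by positivity)] at hR3
    have h1 : R ≤ (p n * x) ^ ℓ :=
      hn1.trans (le_self_pow₀ (hR1.trans hn1) (by omega))
    rw [mul_pow, hxl] at h1
    have h2 : (c * (n : ℝ)) ^ ℓ = c * n * (c ^ (ℓ - 1) * (n : ℝ) ^ (ℓ - 1)) := by
      rw [← mul_pow, ← pow_succ', Nat.sub_add_cancel (by omega)]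
    rw [h2]
    calc c * n * K ≤ c * n * (R * c ^ (ℓ - 1)) := by gcongr
      _ ≤ c * n * ((p n ^ ℓ * (n : ℝ) ^ (ℓ - 1)) * c ^ (ℓ - 1)) := by gcongr
      _ = _ := by ring
  refine le_trans ?_ (finite_bound hℓ hpos (hp1 n) c1 hK1 c2 c3)
  apply sub_le_sub_left
  rw [hm]
  have d1 : ((2 : ℝ) ^ n) ^ ℓ ≤ Real.exp (n * ℓ) := by
    rw [← pow_mul]
    calc (2 : ℝ) ^ (n * ℓ) ≤ (Real.exp 1) ^ (n * ℓ) := by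
          gcongr
          have := Real.add_one_le_exp 1
          linarith
      _ = _ := by rw [← Real.exp_nat_mul]; push_cast; ring_nf
  have d2 : ((n : ℝ) * (ℓ + 1)) ≤ c * n * K / (8 * 2 ^ ℓ) := by
    rw [le_div_iff₀ (by positivity)]
    calc (n : ℝ) * (ℓ + 1) * (8 * 2 ^ ℓ) = n * ((ℓ + 1) * (8 * 2 ^ ℓ)) := by ring
      _ ≤ n * (c * K) := by gcongr
      _ = _ := by ring
  calc _ ≤ Real.exp (n * ℓ) * Real.exp (-(c * n * K / (8 * 2 ^ ℓ))) := by gcongr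
    _ = Real.exp (n * ℓ - c * n * K / (8 * 2 ^ ℓ)) := by rw [← Real.exp_add]; ring_nf
    _ ≤ _ := by
      apply Real.exp_le_exp.2
      linarith
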